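/- arXiv:2503.08801 — 3 statements merged into one kernel-verified Lean document; each statement's English description precedes it below -/
import Mathlib

section
/- For every x with |x| < 1, the series Σ_{k=0}^{∞} (c_k/(2k+1))·((√π/2)·x)^{2k+1} converges to a real number y satisfying erf(y) = x. (That is, the series is the Maclaurin expansion of the inverse error function, convergent on the whole open interval (−1,1).) -/
/-!
Write `H z = ∑ c_k z^(2k)`, `f z = ∑ c_k/(2k+1) z^(2k+1)` and
`P z = ∑ c_k/((k+1)(2k+1)) z^(2k+2)`, so that formally `f' = H` and `P' = 2 f`. The recursion for
`c_k` says `H = 1 + P H`.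

Let `E y = ∫₀^y exp (-t²) dt`. The series is expected to satisfy `f (E y) = y`,
`H (E y) = exp (y²)` and `P (E y) = 1 - exp (-y²)`. As all coefficients are nonnegative, one half of
this, `H_n (E y) ≤ exp (y²)` for the partial sums `H_n` and `y ≥ 0`, follows by induction on `n`:
integrating the bound twice gives `P_n (E y) ≤ 1 - exp (-y²)`, and then
`H_(n+1) ≤ 1 + P_n H_n ≤ exp (y²)` at `E y` (`invErfH_le`). Since `E` maps `[0, ∞)` onto
`[0, √π/2)`, the power series converge on `(-√π/2, √π/2)` (`summable_coeff`).

Inside the disc of convergence, `exp (f²) (1 - P)` has derivative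
`2 f exp (f²) (H (1 - P) - 1) = 0`, hence it is constantly `1`, and so
`(E ∘ f)' = exp (-f²) H = (1 - P) H = 1`, that is `E (f z) = z` (`gaussInt_tsum`).
-/

open Finset

/-- The error function `erf x = (2/√π) ∫₀ˣ exp (-t²) dt`. -/
noncomputable def erf (x : ℝ) : ℝ :=
  (2 / Real.sqrt Real.pi) * ∫ t in (0 : ℝ)..x, Real.exp (-t ^ 2)

/-- Maclaurin coefficients of the inverse error function. -/
noncomputable def invErfCoeff : ℕ → ℝ
  | 0 => 1
  | k + 1 => ∑ m ∈ (Finset.range (k + 1)).attach,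
      invErfCoeff m.1 * invErfCoeff (k - m.1) / ((m.1 + 1) * (2 * m.1 + 1))
decreasing_by
  · have := Finset.mem_range.mp m.2; omega
  · have := Finset.mem_range.mp m.2; omega

/-- The unnormalised error function `∫₀^y exp (-t²) dt`. -/
noncomputable def gaussInt (y : ℝ) : ℝ := ∫ t in (0 : ℝ)..y, Real.exp (-t ^ 2)

lemma gaussInt_zero : gaussInt 0 = 0 := by simp [gaussInt]

lemma gaussInt_hasDerivAt (y : ℝ) : HasDerivAt gaussInt (Real.exp (-y ^ 2)) y := by
  have hc : Continuous fun t : ℝ => Real.exp (-t ^ 2) := by fun_prop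
  exact intervalIntegral.integral_hasDerivAt_right (hc.intervalIntegrable _ _)
    (hc.stronglyMeasurableAtFilter _ _) hc.continuousAt

lemma gaussInt_tendsto :
    Filter.Tendsto gaussInt Filter.atTop (nhds (Real.sqrt Real.pi / 2)) := by
  have h1 : MeasureTheory.IntegrableOn (fun t : ℝ => Real.exp (-t ^ 2)) (Set.Ioi 0) := by
    have := (integrable_exp_neg_mul_sq (b := 1) one_pos).integrableOn (s := Set.Ioi 0)
    simpa using this
  have h2 := MeasureTheory.intervalIntegral_tendsto_integral_Ioi 0 h1 Filter.tendsto_id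
  have h3 := integral_gaussian_Ioi 1
  simp only [neg_mul, one_mul, div_one] at h3
  rw [h3] at h2
  exact h2

/-- A function vanishing at `0` with nonnegative derivative on `[0, ∞)` is nonnegative there. -/
lemma nonneg_of_hasDerivAt {φ φ' : ℝ → ℝ} (hφ : ∀ y, HasDerivAt φ (φ' y) y) (h0 : φ 0 = 0)
    (hpos : ∀ y, 0 ≤ y → 0 ≤ φ' y) {y : ℝ} (hy : 0 ≤ y) : 0 ≤ φ y := by
  have hm : MonotoneOn φ (Set.Ici 0) := by
    apply monotoneOn_of_deriv_nonneg (convex_Ici 0)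
    · exact fun y _ => (hφ y).continuousAt.continuousWithinAt
    · exact fun y _ => (hφ y).differentiableAt.differentiableWithinAt
    · intro y hy
      rw [interior_Ici] at hy
      rw [(hφ y).deriv]
      exact hpos y (le_of_lt hy)
  rw [← h0]
  exact hm Set.self_mem_Ici hy hy

lemma gaussInt_nonneg {y : ℝ} (hy : 0 ≤ y) : 0 ≤ gaussInt y :=
  nonneg_of_hasDerivAt gaussInt_hasDerivAt gaussInt_zero (fun _ _ => (Real.exp_pos _).le) hy

lemma exists_gaussInt_eq {r : ℝ} (h0 : 0 ≤ r) (hr : r < Real.sqrt Real.pi / 2) :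
    ∃ y, 0 ≤ y ∧ gaussInt y = r := by
  obtain ⟨b, hb, hb0⟩ := ((gaussInt_tendsto.eventually (lt_mem_nhds hr)).and
    (Filter.eventually_ge_atTop (0 : ℝ))).exists
  have hc : ContinuousOn gaussInt (Set.Icc 0 b) :=
    fun y _ => (gaussInt_hasDerivAt y).continuousAt.continuousWithinAt
  obtain ⟨y, hy, hyr⟩ := intermediate_value_Icc hb0 hc
    (show r ∈ Set.Icc (gaussInt 0) (gaussInt b) from ⟨by rwa [gaussInt_zero], hb.le⟩)
  exact ⟨y, hy.1, hyr⟩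

/-- The coefficient `c_k / ((k+1)(2k+1))` of `P`. -/
noncomputable def coeffP (k : ℕ) : ℝ := invErfCoeff k / ((k + 1) * (2 * k + 1))

lemma invErfCoeff_zero : invErfCoeff 0 = 1 := by rw [invErfCoeff]

lemma invErfCoeff_succ (k : ℕ) :
    invErfCoeff (k + 1) = ∑ m ∈ range (k + 1), coeffP m * invErfCoeff (k - m) := by
  rw [invErfCoeff, ← Finset.sum_attach (range (k + 1))]
  refine Finset.sum_congr rfl fun m _ => ?_
  rw [coeffP]
  ring

lemma invErfCoeff_nonneg (k : ℕ) : 0 ≤ invErfCoeff k := by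
  induction k using Nat.strong_induction_on with
  | _ k ih =>
    cases k with
    | zero => rw [invErfCoeff_zero]; exact zero_le_one
    | succ k =>
      rw [invErfCoeff_succ]
      refine Finset.sum_nonneg fun m hm => ?_
      have hm := Finset.mem_range.mp hm
      have h1 := ih m hm
      have h2 := ih (k - m) (by omega)
      unfold coeffP
      positivity

lemma coeffP_nonneg (k : ℕ) : 0 ≤ coeffP k := by
  have := invErfCoeff_nonneg k
  unfold coeffP
  positivity

lemma term_hasDerivAt (k : ℕ) (z : ℝ) :
    HasDerivAt (fun z => invErfCoeff k / (2 * k + 1) * z ^ (2 * k + 1))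
      (invErfCoeff k * z ^ (2 * k)) z := by
  have h := (hasDerivAt_pow (2 * k + 1) z).const_mul (invErfCoeff k / (2 * k + 1))
  refine h.congr_deriv ?_
  have : (2 * k + 1 : ℝ) ≠ 0 := by positivity
  push_cast
  field_simp

lemma termP_hasDerivAt (k : ℕ) (z : ℝ) :
    HasDerivAt (fun z => coeffP k * z ^ (2 * k + 2))
      (2 * (invErfCoeff k / (2 * k + 1) * z ^ (2 * k + 1))) z := by
  have h := (hasDerivAt_pow (2 * k + 2) z).const_mul (coeffP k)
  refine h.congr_deriv ?_
  have : (2 * k + 1 : ℝ) ≠ 0 := by positivity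
  have : (k + 1 : ℝ) ≠ 0 := by positivity
  rw [coeffP]
  push_cast
  field_simp

/-- Truncated form of `H = 1 + P H`: the product of the partial sums has all the terms of the
next partial sum of `H`, plus further nonnegative ones. -/
lemma sum_succ_le (n : ℕ) {z : ℝ} (hz : 0 ≤ z) :
    ∑ k ∈ range (n + 1), invErfCoeff k * z ^ (2 * k) ≤
      1 + (∑ k ∈ range n, coeffP k * z ^ (2 * k + 2)) *
        ∑ k ∈ range n, invErfCoeff k * z ^ (2 * k) := by
  rw [Finset.sum_range_succ', invErfCoeff_zero, add_comm]
  simp only [mul_zero, pow_zero, mul_one]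
  gcongr
  calc ∑ k ∈ range n, invErfCoeff (k + 1) * z ^ (2 * (k + 1))
      = ∑ k ∈ range n, ∑ m ∈ range (k + 1),
          (coeffP m * z ^ (2 * m + 2)) * (invErfCoeff (k - m) * z ^ (2 * (k - m))) := by
        refine Finset.sum_congr rfl fun k _ => ?_
        rw [invErfCoeff_succ, Finset.sum_mul]
        refine Finset.sum_congr rfl fun m hm => ?_
        have hm := Finset.mem_range.mp hm
        rw [show 2 * (k + 1) = (2 * m + 2) + 2 * (k - m) by omega, pow_add]
        ring
    _ = ∑ m ∈ range n, ∑ j ∈ range (n - m),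
          (coeffP m * z ^ (2 * m + 2)) * (invErfCoeff j * z ^ (2 * j)) :=
        Finset.sum_range_diag_flip n
          (fun m j => (coeffP m * z ^ (2 * m + 2)) * (invErfCoeff j * z ^ (2 * j)))
    _ ≤ ∑ m ∈ range n, ∑ j ∈ range n,
          (coeffP m * z ^ (2 * m + 2)) * (invErfCoeff j * z ^ (2 * j)) := by
        refine Finset.sum_le_sum fun m _ => ?_
        refine Finset.sum_le_sum_of_subset_of_nonneg
          (Finset.range_subset_range.mpr (Nat.sub_le n m)) fun j _ _ => ?_
        have h1 := coeffP_nonneg m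
        have h2 := invErfCoeff_nonneg j
        positivity
    _ = _ := by rw [Finset.sum_mul_sum]

/-- The a priori bound on the partial sums of `H` along `z = E y`. -/
lemma invErfH_le (n : ℕ) : ∀ y : ℝ, 0 ≤ y →
    ∑ k ∈ range n, invErfCoeff k * gaussInt y ^ (2 * k) ≤ Real.exp (y ^ 2) := by
  induction n with
  | zero => intro y _; simpa using (Real.exp_pos _).le
  | succ n ih =>
    have hS : ∀ y : ℝ, 0 ≤ y →
        0 ≤ y - ∑ k ∈ range n, invErfCoeff k / (2 * k + 1) * gaussInt y ^ (2 * k + 1) := by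
      intro y hy
      refine nonneg_of_hasDerivAt
        (φ' := fun y => 1 - ∑ k ∈ range n,
          invErfCoeff k * gaussInt y ^ (2 * k) * Real.exp (-y ^ 2))
        (φ := fun y => y - ∑ k ∈ range n, invErfCoeff k / (2 * k + 1) * gaussInt y ^ (2 * k + 1))
        ?_ ?_ ?_ hy
      · intro y
        refine (hasDerivAt_id y).sub (HasDerivAt.fun_sum fun k _ => ?_)
        exact (term_hasDerivAt k (gaussInt y)).comp y (gaussInt_hasDerivAt y)
      · simp [gaussInt_zero]
      · intro y hy
        rw [← Finset.sum_mul, sub_nonneg]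
        calc _ ≤ Real.exp (y ^ 2) * Real.exp (-y ^ 2) := by
              gcongr
              exact ih y hy
          _ = 1 := by rw [← Real.exp_add]; simp
    have hP : ∀ y : ℝ, 0 ≤ y →
        0 ≤ 1 - Real.exp (-y ^ 2) - ∑ k ∈ range n, coeffP k * gaussInt y ^ (2 * k + 2) := by
      intro y hy
      refine nonneg_of_hasDerivAt
        (φ' := fun y => 0 - Real.exp (-y ^ 2) * (-(2 * y)) - ∑ k ∈ range n,
          2 * (invErfCoeff k / (2 * k + 1) * gaussInt y ^ (2 * k + 1)) * Real.exp (-y ^ 2))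
        (φ := fun y => 1 - Real.exp (-y ^ 2) -
          ∑ k ∈ range n, coeffP k * gaussInt y ^ (2 * k + 2))
        ?_ ?_ ?_ hy
      · intro y
        have hsq : HasDerivAt (fun y : ℝ => -y ^ 2) (-(2 * y)) y := by
          simpa using (hasDerivAt_pow 2 y).fun_neg
        refine ((hasDerivAt_const y 1).sub hsq.exp).sub (HasDerivAt.fun_sum fun k _ => ?_)
        exact (termP_hasDerivAt k (gaussInt y)).comp y (gaussInt_hasDerivAt y)
      · simp [gaussInt_zero]
      · intro y hy
        rw [← Finset.sum_mul, ← Finset.mul_sum]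
        have := mul_nonneg (hS y hy) (Real.exp_pos (-y ^ 2)).le
        linarith
    intro y hy
    refine (sum_succ_le n (gaussInt_nonneg hy)).trans ?_
    have hH0 : 0 ≤ ∑ k ∈ range n, invErfCoeff k * gaussInt y ^ (2 * k) :=
      Finset.sum_nonneg fun k _ =>
        mul_nonneg (invErfCoeff_nonneg k) (pow_nonneg (gaussInt_nonneg hy) _)
    have he : Real.exp (-y ^ 2) ≤ 1 := Real.exp_le_one_iff.mpr (by nlinarith [sq_nonneg y])
    have hm := mul_le_mul (sub_nonneg.mp (hP y hy)) (ih y hy) hH0 (by linarith)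
    have h1 : Real.exp (-y ^ 2) * Real.exp (y ^ 2) = 1 := by rw [← Real.exp_add]; simp
    linarith

lemma summable_coeff {r : ℝ} (h0 : 0 ≤ r) (hr : r < Real.sqrt Real.pi / 2) :
    Summable fun k => invErfCoeff k * r ^ (2 * k) := by
  obtain ⟨y, hy, rfl⟩ := exists_gaussInt_eq h0 hr
  exact summable_of_sum_range_le
    (fun k => mul_nonneg (invErfCoeff_nonneg k) (pow_nonneg h0 _)) fun n => invErfH_le n y hy

lemma summable_coeff_of_abs_le {r z : ℝ} (hs : Summable fun k => invErfCoeff k * r ^ (2 * k))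
    (hz : |z| ≤ r) : Summable fun k => invErfCoeff k * z ^ (2 * k) := by
  refine Summable.of_nonneg_of_le
    (fun k => mul_nonneg (invErfCoeff_nonneg k) ((even_two_mul k).pow_nonneg z))
    (fun k => ?_) hs
  rw [← (even_two_mul k).pow_abs]
  have := invErfCoeff_nonneg k
  gcongr

lemma summable_coeff_div {z : ℝ} (hs : Summable fun k => invErfCoeff k * z ^ (2 * k)) :
    Summable fun k : ℕ => invErfCoeff k / (2 * k + 1) * z ^ (2 * k + 1) := by
  refine Summable.of_norm_bounded (hs.mul_right |z|) fun k => ?_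
  have h := invErfCoeff_nonneg k
  have hle : invErfCoeff k / (2 * k + 1) ≤ invErfCoeff k :=
    div_le_self h (by linarith [Nat.cast_nonneg (α := ℝ) k])
  have h2 : 0 ≤ invErfCoeff k / (2 * k + 1) := by positivity
  rw [Real.norm_eq_abs, abs_mul, abs_of_nonneg h2, pow_succ, abs_mul,
    abs_of_nonneg ((even_two_mul k).pow_nonneg z), ← mul_assoc]
  have := (even_two_mul k).pow_nonneg z
  gcongr

lemma summable_coeffP {z : ℝ} (hs : Summable fun k => invErfCoeff k * z ^ (2 * k)) :
    Summable fun k : ℕ => coeffP k * z ^ (2 * k + 2) := by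
  have hp : ∀ k, 0 ≤ z ^ (2 * k) := fun k => (even_two_mul k).pow_nonneg z
  refine Summable.of_nonneg_of_le (fun k => ?_) (fun k => ?_) (hs.mul_right (z ^ 2))
  · rw [pow_add]
    exact mul_nonneg (coeffP_nonneg k) (mul_nonneg (hp k) (sq_nonneg z))
  · have hle : coeffP k ≤ invErfCoeff k :=
      div_le_self (invErfCoeff_nonneg k) (by nlinarith [Nat.cast_nonneg (α := ℝ) k])
    have := hp k
    rw [pow_add, ← mul_assoc]
    gcongr

/-- The functional equation `H = 1 + P H`. -/
lemma tsum_functional {z : ℝ} (hs : Summable fun k => invErfCoeff k * z ^ (2 * k)) :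
    ∑' k, invErfCoeff k * z ^ (2 * k) =
      1 + (∑' k, coeffP k * z ^ (2 * k + 2)) * ∑' k, invErfCoeff k * z ^ (2 * k) := by
  rw [tsum_mul_tsum_eq_tsum_sum_range_of_summable_norm (summable_coeffP hs).norm hs.norm,
    hs.tsum_eq_zero_add, invErfCoeff_zero]
  simp only [mul_zero, pow_zero, mul_one]
  congr 2
  ext k
  rw [invErfCoeff_succ, Finset.sum_mul]
  refine Finset.sum_congr rfl fun m hm => ?_
  have hm := Finset.mem_range.mp hm
  rw [show 2 * (k + 1) = (2 * m + 2) + 2 * (k - m) by omega, pow_add]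
  ring

lemma eq_of_hasDerivAt_zero {φ : ℝ → ℝ} {r z : ℝ} (hr : 0 < r) (hz : z ∈ Set.Ioo (-r) r)
    (hφ : ∀ w ∈ Set.Ioo (-r) r, HasDerivAt φ 0 w) : φ z = φ 0 := by
  refine isOpen_Ioo.is_const_of_deriv_eq_zero isPreconnected_Ioo
    (fun w hw => (hφ w hw).differentiableAt.differentiableWithinAt)
    (fun w hw => (hφ w hw).deriv) hz ⟨by linarith, hr⟩

lemma gaussInt_tsum {r z : ℝ} (hr : 0 < r) (hs : Summable fun k => invErfCoeff k * r ^ (2 * k))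
    (hz : z ∈ Set.Ioo (-r) r) :
    gaussInt (∑' k : ℕ, invErfCoeff k / (2 * k + 1) * z ^ (2 * k + 1)) = z := by
  set H : ℝ → ℝ := fun z => ∑' k, invErfCoeff k * z ^ (2 * k) with hH
  set f : ℝ → ℝ := fun z => ∑' k : ℕ, invErfCoeff k / (2 * k + 1) * z ^ (2 * k + 1) with hf
  set P : ℝ → ℝ := fun z => ∑' k, coeffP k * z ^ (2 * k + 2) with hP
  have h0 : (0 : ℝ) ∈ Set.Ioo (-r) r := ⟨by linarith, hr⟩
  have habs : ∀ w ∈ Set.Ioo (-r) r, |w| ≤ r := fun w hw => (abs_lt.mpr hw).le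
  have hsw : ∀ w ∈ Set.Ioo (-r) r, Summable fun k => invErfCoeff k * w ^ (2 * k) :=
    fun w hw => summable_coeff_of_abs_le hs (habs w hw)
  have hf' : ∀ w ∈ Set.Ioo (-r) r, HasDerivAt f (H w) w := by
    intro w hw
    refine hasDerivAt_tsum_of_isPreconnected hs isOpen_Ioo isPreconnected_Ioo
      (fun k w _ => term_hasDerivAt k w) (fun k w hw => ?_) h0
      (summable_coeff_div (hsw 0 h0)) hw
    have := invErfCoeff_nonneg k
    rw [Real.norm_eq_abs, abs_mul, abs_of_nonneg this, abs_pow]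
    have := habs w hw
    gcongr
  have hP' : ∀ w ∈ Set.Ioo (-r) r, HasDerivAt P (2 * f w) w := by
    intro w hw
    rw [hf, ← tsum_mul_left]
    refine hasDerivAt_tsum_of_isPreconnected ((summable_coeff_div hs).mul_left 2)
      isOpen_Ioo isPreconnected_Ioo
      (fun k w _ => termP_hasDerivAt k w) (fun k w hw => ?_) h0
      (summable_coeffP (hsw 0 h0)) hw
    have := invErfCoeff_nonneg k
    have h2 : 0 ≤ invErfCoeff k / (2 * k + 1) := by positivity
    rw [Real.norm_eq_abs, abs_mul, abs_mul, abs_of_nonneg h2, abs_pow, abs_two]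
    have := habs w hw
    gcongr
  have hf0 : f 0 = 0 := by simp [hf]
  have hP0 : P 0 = 0 := by simp [hP]
  have hfun : ∀ w ∈ Set.Ioo (-r) r, H w * (1 - P w) = 1 := by
    intro w hw
    have : H w = 1 + P w * H w := tsum_functional (hsw w hw)
    linarith
  have hexp : ∀ w ∈ Set.Ioo (-r) r, Real.exp (f w ^ 2) * (1 - P w) = 1 := by
    intro w hw
    have := eq_of_hasDerivAt_zero (φ := fun w => Real.exp (f w ^ 2) * (1 - P w)) hr hw ?_
    · simpa [hf0, hP0] using this
    · intro w hw
      have h := ((hf' w hw).pow 2).exp.mul ((hP' w hw).const_sub 1)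
      refine h.congr_deriv ?_
      simp only [Pi.pow_apply]
      push_cast
      linear_combination (Real.exp (f w ^ 2) * (2 * f w)) * hfun w hw
  have := eq_of_hasDerivAt_zero (φ := fun w => gaussInt (f w) - w) hr hz ?_
  · simp only [hf0, gaussInt_zero, sub_zero] at this
    exact sub_eq_zero.mp this
  · intro w hw
    have h := ((gaussInt_hasDerivAt (f w)).comp w (hf' w hw)).sub (hasDerivAt_id w)
    refine h.congr_deriv ?_
    have hx : Real.exp (-f w ^ 2) = 1 - P w := by
      rw [Real.exp_neg]
      exact inv_eq_of_mul_eq_one_right (hexp w hw)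
    rw [hx]
    linarith [hfun w hw]

/-- On `(-1,1)` the Maclaurin series of the inverse error function converges, and its
sum `y` satisfies `erf y = x`. -/
theorem invErf_series_hasSum (x : ℝ) (hx : |x| < 1) :
    ∃ y : ℝ,
      HasSum (fun k : ℕ =>
        (invErfCoeff k / (2 * k + 1)) * ((Real.sqrt Real.pi / 2) * x) ^ (2 * k + 1)) y ∧
      erf y = x := by
  have hpi : 0 < Real.sqrt Real.pi := Real.sqrt_pos.mpr Real.pi_pos
  have hz : |Real.sqrt Real.pi / 2 * x| < Real.sqrt Real.pi / 2 := by
    rw [abs_mul, abs_of_pos (by positivity)]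
    exact mul_lt_of_lt_one_right (by positivity) hx
  obtain ⟨r, hr1, hr2⟩ := exists_between hz
  have hr : 0 < r := (abs_nonneg _).trans_lt hr1
  have hs := summable_coeff hr.le hr2
  refine ⟨_, (summable_coeff_div (summable_coeff_of_abs_le hs hr1.le)).hasSum, ?_⟩
  have h := gaussInt_tsum hr hs (abs_lt.mp hr1)
  rw [gaussInt] at h
  rw [erf, h]
  field_simp
end

section
/- Let f : ℝ^d → ℝ^m be L-Lipschitz (with the Euclidean norm on both spaces) with L > 0, let x ∈ ℝ^d, let y ∈ {1,…,m} and suppose the prediction margin M := f(x)_y − max_{i ≠ y} f(x)_i is positive. Then for every perturbation τ ∈ ℝ^d with ‖τ‖₂ < M/(√2·L) and every i ≠ y, one has f(x+τ)_y > f(x+τ)_i; in particular arg max_k f(x+τ)_k = y. (Hence the certified radius satisfies R(f,x) ≥ M(f,x)/(√2·L).) -/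
open Finset

/-! A difference of two coordinates is the inner product with `e_i - e_j`, a vector of norm `√2`,
so it changes by at most `√2` times the Euclidean norm of the change in `f`
(`coord_sub_le_sqrt_two_mul_norm`). The Lipschitz bound makes this at most `√2 L ‖τ‖ < M`, and `M` is
at most the gap between class `y` and any other class at `x`. -/

/-- The constant `√2` comes from `(a - b)² ≤ 2 (a² + b²)` applied to the two coordinates. -/
lemma coord_sub_le_sqrt_two_mul_norm {m : ℕ} (v : EuclideanSpace ℝ (Fin m)) {i j : Fin m}
    (hij : i ≠ j) : v i - v j ≤ Real.sqrt 2 * ‖v‖ := by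
  have hsum : v i ^ 2 + v j ^ 2 ≤ ‖v‖ ^ 2 := by
    rw [EuclideanSpace.real_norm_sq_eq, ← Finset.sum_pair (f := fun k => v k ^ 2) hij]
    exact Finset.sum_le_sum_of_subset_of_nonneg (Finset.subset_univ _)
      fun k _ _ => sq_nonneg (v k)
  refine le_of_abs_le (abs_le_of_sq_le_sq ?_ (by positivity))
  rw [mul_pow, Real.sq_sqrt (by norm_num)]
  nlinarith [sq_nonneg (v i + v j)]

/-- If `f : ℝᵈ → ℝᵐ` is `L`-Lipschitz and the prediction margin
`M = f(x)_y - max_{i ≠ y} f(x)_i` is positive, then for every perturbation `τ` with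
`‖τ‖₂ < M / (√2 L)`, the class `y` still strictly dominates every other class at `x + τ`;
hence the certified radius satisfies `R(f,x) ≥ M / (√2 L)`. -/
theorem certified_radius_lipschitz (d m : ℕ) (hm : 2 ≤ m)
    (f : EuclideanSpace ℝ (Fin d) → EuclideanSpace ℝ (Fin m))
    (L : ℝ) (hL : 0 < L)
    (hf : ∀ x₁ x₂, ‖f x₁ - f x₂‖ ≤ L * ‖x₁ - x₂‖)
    (x : EuclideanSpace ℝ (Fin d)) (y : Fin m)
    (hne : (Finset.univ.erase y).Nonempty)
    (M : ℝ) (hM : M = f x y - (Finset.univ.erase y).sup' hne (fun i => f x i))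
    (hMpos : 0 < M)
    (τ : EuclideanSpace ℝ (Fin d)) (hτ : ‖τ‖ < M / (Real.sqrt 2 * L)) :
    ∀ i, i ≠ y → f (x + τ) i < f (x + τ) y := by
  intro i hi
  have hgap : f x i ≤ f x y - M := by
    have := Finset.le_sup' (fun i => f x i) (Finset.mem_erase.2 ⟨hi, Finset.mem_univ i⟩)
    simp only at this
    linarith
  have hcoord := coord_sub_le_sqrt_two_mul_norm (f (x + τ) - f x) hi
  simp only [PiLp.sub_apply] at hcoord
  have hlip := hf (x + τ) x
  rw [add_sub_cancel_left] at hlip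
  have hscaled := mul_le_mul_of_nonneg_left hlip (Real.sqrt_nonneg 2)
  rw [lt_div_iff₀ (by positivity)] at hτ
  linarith
end

section
/- Let σ > 0, d ≥ 1, and let f : ℝ^d → [0,1] be measurable. Define the Gaussian smoothing ĥ(x) = ∫_{ℝ^d} f(z)·(2πσ²)^{−d/2}·exp(−‖x−z‖²/(2σ²)) dz. Then x ↦ σ·Φ⁻¹(ĥ(x)) is 1-Lipschitz: for all x₁, x₂ ∈ ℝ^d and all u₁, u₂ ∈ ℝ with Φ(u₁) = ĥ(x₁) and Φ(u₂) = ĥ(x₂), one has u₁ − u₂ ≤ ‖x₁ − x₂‖/σ. -/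
/-!
The proof is the Neyman–Pearson argument. Let `ρ = ‖x₁ - x₂‖` and write `x₁ - x₂ = ρ • e` with `e` a
unit vector. The half-space `H = {z | ⟪e, x₁ - z⟫ ≤ σ u₁}` has mass `Φ(u₁) = h x₁` under
`N(x₁, σ² I)`, and mass `Φ(u₁ - ρ / σ)` under `N(x₂, σ² I)` (`integral_halfSpace_isoGaussian`,
obtained by identifying the law of a one-dimensional marginal through its characteristic function).
The likelihood ratio `p₂ / p₁` of the two Gaussian densities is a monotone function of
`⟪e, x₁ - z⟫`, at most `k` on `H` and at least `k` off `H`, where `k` is its value on the boundary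
of `H`. As `0 ≤ f ≤ 1`, this gives `(f - 1_H) * (p₂ - k * p₁) ≥ 0` pointwise; integrating,
`h x₂ - Φ(u₁ - ρ / σ) ≥ k * (h x₁ - Φ(u₁)) = 0`. Strict monotonicity of `Φ` concludes.
-/

open MeasureTheory

/-- The standard normal cumulative distribution function. -/
noncomputable def stdNormalCDF (y : ℝ) : ℝ :=
  ∫ t in Set.Iic y, (1 / Real.sqrt (2 * Real.pi)) * Real.exp (-t ^ 2 / 2)

open ProbabilityTheory
open scoped RealInnerProductSpace

lemma stdNormalCDF_eq_gaussianReal (y : ℝ) :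
    stdNormalCDF y = (gaussianReal 0 1).real (Set.Iic y) := by
  rw [measureReal_def, gaussianReal_apply_eq_integral 0 one_ne_zero, ENNReal.toReal_ofReal
    (integral_nonneg fun _ => gaussianPDFReal_nonneg _ _ _)]
  simp [stdNormalCDF, gaussianPDFReal]

lemma stdNormalCDF_strictMono : StrictMono stdNormalCDF := by
  intro a b hab
  rw [stdNormalCDF_eq_gaussianReal, stdNormalCDF_eq_gaussianReal, ← sub_pos,
    ← measureReal_sdiff (Set.Iic_subset_Iic.2 hab.le) measurableSet_Iic, Set.Iic_sdiff_Iic]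
  refine ENNReal.toReal_pos (fun h0 => ?_) (measure_ne_top _ _)
  have := gaussianReal_absolutelyContinuous' 0 one_ne_zero h0
  simp at this
  linarith

/-- The density at `w` of the isotropic Gaussian `N(0, σ² I_d)`. -/
noncomputable def isoGaussianPDF (d : ℕ) (σ : ℝ) (w : EuclideanSpace ℝ (Fin d)) : ℝ :=
  (2 * Real.pi * σ ^ 2) ^ (-(d : ℝ) / 2) * Real.exp (-‖w‖ ^ 2 / (2 * σ ^ 2))

lemma isoGaussianPDF_nonneg (d : ℕ) (σ : ℝ) (w : EuclideanSpace ℝ (Fin d)) :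
    0 ≤ isoGaussianPDF d σ w := by
  unfold isoGaussianPDF; positivity

lemma continuous_isoGaussianPDF (d : ℕ) (σ : ℝ) : Continuous (isoGaussianPDF d σ) := by
  unfold isoGaussianPDF; fun_prop

lemma integrable_isoGaussianPDF (d : ℕ) {σ : ℝ} (hσ : 0 < σ) :
    Integrable (isoGaussianPDF d σ) := by
  unfold isoGaussianPDF
  refine Integrable.const_mul ?_ _
  have hb : 0 < (((1 / (2 * σ ^ 2) : ℝ) : ℂ)).re := by
    rw [Complex.ofReal_re]; positivity
  have := (GaussianFourier.integrable_cexp_neg_mul_sq_norm_add hb 0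
    (0 : EuclideanSpace ℝ (Fin d))).re
  refine this.congr (Filter.Eventually.of_forall fun w => ?_)
  have : (-(((1 / (2 * σ ^ 2) : ℝ) : ℂ)) * (‖w‖ : ℂ) ^ 2 + 0 * ((inner ℝ 0 w : ℝ) : ℂ))
      = ((-‖w‖ ^ 2 / (2 * σ ^ 2) : ℝ) : ℂ) := by
    push_cast; ring
  simp only [this, ← Complex.ofReal_exp]
  exact Complex.ofReal_re _

/-- Under `N(0, σ² I_d)`, the normalized marginal in a unit direction is standard normal. -/
lemma map_inner_isoGaussian (d : ℕ) {σ : ℝ} (hσ : 0 < σ) (e : EuclideanSpace ℝ (Fin d))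
    (he : ‖e‖ = 1) :
    (volume.withDensity fun w => ENNReal.ofReal (isoGaussianPDF d σ w)).map
      (fun w => ⟪e, w⟫ / σ) = gaussianReal 0 1 := by
  have hm : Measurable fun w => ENNReal.ofReal (isoGaussianPDF d σ w) :=
    (continuous_isoGaussianPDF d σ).measurable.ennreal_ofReal
  have hL : Measurable fun w : EuclideanSpace ℝ (Fin d) => ⟪e, w⟫ / σ := by fun_prop
  have := isFiniteMeasure_withDensity_ofReal (integrable_isoGaussianPDF d hσ).2
  refine Measure.ext_of_charFun (funext fun t => ?_)
  rw [charFun_gaussianReal, charFun_apply_real, integral_map hL.aemeasurable (by fun_prop),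
    integral_withDensity_eq_integral_toReal_smul hm (by simp)]
  have hb : 0 < (((1 / (2 * σ ^ 2) : ℝ) : ℂ)).re := by
    rw [Complex.ofReal_re]; positivity
  have hσ' : (σ : ℂ) ≠ 0 := by exact_mod_cast hσ.ne'
  have key := GaussianFourier.integral_cexp_neg_mul_sq_norm_add hb (Complex.I * t / σ) e
  have hint : ∀ w : EuclideanSpace ℝ (Fin d),
      (ENNReal.ofReal (isoGaussianPDF d σ w)).toReal •
        Complex.exp (t * ((⟪e, w⟫ / σ : ℝ) : ℂ) * Complex.I) =
      (((2 * Real.pi * σ ^ 2) ^ (-(d : ℝ) / 2) : ℝ) : ℂ) *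
        Complex.exp (-(((1 / (2 * σ ^ 2) : ℝ) : ℂ)) * (‖w‖ : ℂ) ^ 2
          + Complex.I * t / σ * ((⟪e, w⟫ : ℝ) : ℂ)) := by
    intro w
    rw [ENNReal.toReal_ofReal (isoGaussianPDF_nonneg _ _ _), isoGaussianPDF, Complex.real_smul,
      Complex.ofReal_mul, mul_assoc, Complex.ofReal_exp, ← Complex.exp_add]
    congr 2
    push_cast
    field_simp
  simp_rw [hint]
  rw [integral_const_mul, key, he, ← mul_assoc]
  have hpow : (((2 * Real.pi * σ ^ 2) ^ (-(d : ℝ) / 2) : ℝ) : ℂ) *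
      (Real.pi / ((1 / (2 * σ ^ 2) : ℝ) : ℂ)) ^
        ((Module.finrank ℝ (EuclideanSpace ℝ (Fin d)) : ℂ) / 2) = 1 := by
    have h1 : (Real.pi / ((1 / (2 * σ ^ 2) : ℝ) : ℂ)) = ((2 * Real.pi * σ ^ 2 : ℝ) : ℂ) := by
      push_cast; field_simp
    have h2 : ((Module.finrank ℝ (EuclideanSpace ℝ (Fin d)) : ℂ) / 2)
        = (((d : ℝ) / 2 : ℝ) : ℂ) := by simp
    rw [h1, h2, ← Complex.ofReal_cpow (by positivity), ← Complex.ofReal_mul,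
      ← Real.rpow_add (by positivity)]
    simp [neg_div]
  rw [hpow, one_mul]
  congr 1
  push_cast
  field_simp
  rw [Complex.I_sq]
  ring

lemma integral_halfSpace_isoGaussian (d : ℕ) {σ : ℝ} (hσ : 0 < σ)
    (e : EuclideanSpace ℝ (Fin d)) (he : ‖e‖ = 1) (x : EuclideanSpace ℝ (Fin d)) (s : ℝ) :
    ∫ z, (if ⟪e, x - z⟫ ≤ σ * s then (1 : ℝ) else 0) * isoGaussianPDF d σ (x - z)
      = stdNormalCDF s := by
  have hL : Measurable fun w : EuclideanSpace ℝ (Fin d) => ⟪e, w⟫ / σ := by fun_prop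
  have hS : MeasurableSet ((fun w : EuclideanSpace ℝ (Fin d) => ⟪e, w⟫ / σ) ⁻¹' Set.Iic s) :=
    hL measurableSet_Iic
  rw [integral_sub_left_eq_self
    (fun w => (if ⟪e, w⟫ ≤ σ * s then (1 : ℝ) else 0) * isoGaussianPDF d σ w) volume x,
    stdNormalCDF_eq_gaussianReal, ← map_inner_isoGaussian d hσ e he,
    measureReal_def, Measure.map_apply hL measurableSet_Iic, withDensity_apply _ hS,
    ← integral_eq_lintegral_of_nonneg_ae
      (Filter.Eventually.of_forall fun w => isoGaussianPDF_nonneg d σ w)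
      (continuous_isoGaussianPDF d σ).aestronglyMeasurable,
    ← integral_indicator hS]
  congr 1 with w
  simp [Set.indicator, div_le_iff₀ hσ, mul_comm σ s]

/-- Lipschitz constant of the randomized-smoothing map: if `ĥ` is the Gaussian smoothing
of a measurable `f : ℝᵈ → [0,1]`, then `x ↦ σ · Φ⁻¹(ĥ(x))` is 1-Lipschitz. -/
theorem smoothed_probit_lipschitz (d : ℕ) (hd : 1 ≤ d) (σ : ℝ) (hσ : 0 < σ)
    (f : EuclideanSpace ℝ (Fin d) → ℝ) (hf : Measurable f)
    (hf01 : ∀ z, f z ∈ Set.Icc (0 : ℝ) 1)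
    (h : EuclideanSpace ℝ (Fin d) → ℝ)
    (hh : ∀ x, h x = ∫ z, f z *
      ((2 * Real.pi * σ ^ 2) ^ (-(d : ℝ) / 2) * Real.exp (-‖x - z‖ ^ 2 / (2 * σ ^ 2))))
    (x₁ x₂ : EuclideanSpace ℝ (Fin d)) (u₁ u₂ : ℝ)
    (hu₁ : stdNormalCDF u₁ = h x₁) (hu₂ : stdNormalCDF u₂ = h x₂) :
    u₁ - u₂ ≤ ‖x₁ - x₂‖ / σ := by
  obtain ⟨e, he, hxe⟩ : ∃ e : EuclideanSpace ℝ (Fin d), ‖e‖ = 1 ∧ x₁ - x₂ = ‖x₁ - x₂‖ • e := by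
    by_cases h0 : x₁ - x₂ = 0
    · exact ⟨EuclideanSpace.single ⟨0, hd⟩ 1, by simp, by simp [h0]⟩
    · have hn : ‖x₁ - x₂‖ ≠ 0 := norm_ne_zero_iff.2 h0
      exact ⟨‖x₁ - x₂‖⁻¹ • (x₁ - x₂), by simp [norm_smul, hn], by simp [smul_smul, hn]⟩
  have hρ : 0 ≤ ‖x₁ - x₂‖ := norm_nonneg _
  set ρ := ‖x₁ - x₂‖
  have hx₂ : ∀ z, x₂ - z = (x₁ - z) - ρ • e := fun z => by rw [← hxe]; abel
  have hee : ⟪e, e⟫ = 1 := by rw [real_inner_self_eq_norm_sq, he]; norm_num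
  let χ : EuclideanSpace ℝ (Fin d) → ℝ := fun z => if ⟪e, x₁ - z⟫ ≤ σ * u₁ then 1 else 0
  have hχm : Measurable χ :=
    Measurable.ite (measurableSet_le (by fun_prop) measurable_const)
      measurable_const measurable_const
  have hp : ∀ x : EuclideanSpace ℝ (Fin d), Integrable fun z => isoGaussianPDF d σ (x - z) :=
    fun x => (integrable_isoGaussianPDF d hσ).comp_sub_left x
  have hfi : ∀ x, Integrable fun z => f z * isoGaussianPDF d σ (x - z) := fun x =>
    (hp x).bdd_mul (c := 1) hf.aestronglyMeasurable (Filter.Eventually.of_forall fun z => by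
      rw [Real.norm_eq_abs, abs_of_nonneg (hf01 z).1]; exact (hf01 z).2)
  have hχi : ∀ x, Integrable fun z => χ z * isoGaussianPDF d σ (x - z) := fun x =>
    (hp x).bdd_mul (c := 1) hχm.aestronglyMeasurable (Filter.Eventually.of_forall fun z => by
      simp only [χ]; split_ifs <;> simp)
  have hχ₁ : ∫ z, χ z * isoGaussianPDF d σ (x₁ - z) = stdNormalCDF u₁ :=
    integral_halfSpace_isoGaussian d hσ e he x₁ u₁
  have hχ₂ : ∫ z, χ z * isoGaussianPDF d σ (x₂ - z) = stdNormalCDF (u₁ - ρ / σ) := by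
    rw [← integral_halfSpace_isoGaussian d hσ e he x₂ (u₁ - ρ / σ)]
    congr 1 with z
    have hiff : ⟪e, x₂ - z⟫ ≤ σ * (u₁ - ρ / σ) ↔ ⟪e, x₁ - z⟫ ≤ σ * u₁ := by
      rw [hx₂, inner_sub_right, inner_smul_right, hee, mul_sub, mul_div_cancel₀ _ hσ.ne', mul_one]
      exact sub_le_sub_iff_right ρ
    simp only [χ, hiff]
  -- the value of the likelihood ratio `p₂ / p₁` on the boundary of the half-space
  let k : ℝ := Real.exp ((2 * ρ * (σ * u₁) - ρ ^ 2) / (2 * σ ^ 2))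
  have hratio : ∀ z, isoGaussianPDF d σ (x₂ - z) =
      Real.exp ((2 * ρ * ⟪e, x₁ - z⟫ - ρ ^ 2) / (2 * σ ^ 2)) * isoGaussianPDF d σ (x₁ - z) := by
    intro z
    have hn : ‖x₂ - z‖ ^ 2 = ‖x₁ - z‖ ^ 2 - 2 * ρ * ⟪e, x₁ - z⟫ + ρ ^ 2 := by
      rw [hx₂, norm_sub_sq_real, inner_smul_right, norm_smul, he, real_inner_comm,
        Real.norm_of_nonneg hρ]
      ring
    rw [isoGaussianPDF, isoGaussianPDF, mul_left_comm, ← Real.exp_add, hn]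
    congr 2
    ring
  have hpt : ∀ z, 0 ≤ (f z * isoGaussianPDF d σ (x₂ - z) - χ z * isoGaussianPDF d σ (x₂ - z)) -
      k * (f z * isoGaussianPDF d σ (x₁ - z) - χ z * isoGaussianPDF d σ (x₁ - z)) := by
    intro z
    rw [hratio z]
    set q := Real.exp ((2 * ρ * ⟪e, x₁ - z⟫ - ρ ^ 2) / (2 * σ ^ 2)) with hq
    have hprod : 0 ≤ (f z - χ z) * (q - k) := by
      by_cases hz : ⟪e, x₁ - z⟫ ≤ σ * u₁
      · have hqk : q ≤ k := by simp only [hq, k]; gcongr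
        simp only [χ, if_pos hz]
        exact mul_nonneg_of_nonpos_of_nonpos (by linarith [(hf01 z).2]) (by linarith)
      · have hz' := (not_le.1 hz).le
        have hqk : k ≤ q := by simp only [hq, k]; gcongr
        simp only [χ, if_neg hz]
        exact mul_nonneg (by linarith [(hf01 z).1]) (by linarith)
    have := mul_nonneg hprod (isoGaussianPDF_nonneg d σ (x₁ - z))
    linarith
  have hsub : ∀ x, Integrable fun z =>
      f z * isoGaussianPDF d σ (x - z) - χ z * isoGaussianPDF d σ (x - z) :=
    fun x => (hfi x).sub (hχi x)
  have hint : 0 ≤ ∫ z,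
      (f z * isoGaussianPDF d σ (x₂ - z) - χ z * isoGaussianPDF d σ (x₂ - z)) -
      k * (f z * isoGaussianPDF d σ (x₁ - z) - χ z * isoGaussianPDF d σ (x₁ - z)) :=
    integral_nonneg hpt
  have hf₁ : ∫ z, f z * isoGaussianPDF d σ (x₁ - z) = stdNormalCDF u₁ := (hu₁.trans (hh x₁)).symm
  have hf₂ : ∫ z, f z * isoGaussianPDF d σ (x₂ - z) = stdNormalCDF u₂ := (hu₂.trans (hh x₂)).symm
  rw [integral_sub (hsub x₂) ((hsub x₁).const_mul k),
    integral_const_mul, integral_sub (hfi x₂) (hχi x₂), integral_sub (hfi x₁) (hχi x₁),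
    hχ₁, hχ₂, hf₁, hf₂, sub_self, mul_zero, sub_zero, sub_nonneg,
    stdNormalCDF_strictMono.le_iff_le] at hint
  linarith
end
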